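/- Let q ≥ 2 be an integer, let T be a tournament, and let S₁ and S₂ be disjoint sets of vertices of T with |S₁| = q + 1 and |S₂| = q. If the number of arcs from S₁ to S₂ is at least q² − q − 1, then there is a (q − 1)-matching from S₁ to S₂. -/

import Mathlib

open Set

/-- `T` is a tournament: irreflexive, and for distinct vertices exactly one
of the two possible arcs is present. -/
def IsTournament {V : Type*} (T : V → V → Prop) : Prop :=
  (∀ x, ¬ T x x) ∧ ∀ x y, x ≠ y → (T x y ↔ ¬ T y x)

/-- `c` is a directed cycle of length `q` in the digraph `T`. -/
def IsCycle {V : Type*} (T : V → V → Prop) (q : ℕ) (c : ZMod q → V) : Prop :=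
  Function.Injective c ∧ ∀ i, T (c i) (c (i + 1))

/-- The cycles in the family `C` are pairwise vertex-disjoint. -/
def DisjointCycles {V : Type*} {k q : ℕ} (C : Fin k → ZMod q → V) : Prop :=
  ∀ j j' : Fin k, j ≠ j' → Disjoint (Set.range (C j)) (Set.range (C j'))

/-- `T` contains `k` pairwise vertex-disjoint directed cycles of length `q`. -/
def HasDisjointCycles {V : Type*} (T : V → V → Prop) (k q : ℕ) : Prop :=
  ∃ C : Fin k → ZMod q → V, (∀ j, IsCycle T q (C j)) ∧ DisjointCycles C

/-- The out-degree of a vertex `v`. -/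
noncomputable def outDeg {V : Type*} (T : V → V → Prop) (v : V) : ℕ :=
  {w | T v w}.ncard

/-- `d⁺(v, Y)`: the number of out-neighbours of `v` inside the set `Y`. -/
noncomputable def outDegTo {V : Type*} (T : V → V → Prop) (v : V) (Y : Set V) : ℕ :=
  {w ∈ Y | T v w}.ncard

/-- `d⁺(X, v)`: the number of in-neighbours of `v` inside the set `X`. -/
noncomputable def inDegFrom {V : Type*} (T : V → V → Prop) (X : Set V) (v : V) : ℕ :=
  {x ∈ X | T x v}.ncard

/-- `d⁺(X, Y)`: the number of arcs from `X` to `Y`. -/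
noncomputable def arcs {V : Type*} (T : V → V → Prop) (X Y : Set V) : ℕ :=
  {p : V × V | p.1 ∈ X ∧ p.2 ∈ Y ∧ T p.1 p.2}.ncard

/-- There is an `r`-matching from `X` to `Y`: `r` arcs from `X` to `Y` that
pairwise share no endpoints. -/
def HasMatching {V : Type*} (T : V → V → Prop) (X Y : Set V) (r : ℕ) : Prop :=
  ∃ e : Fin r → V × V,
    (∀ i, (e i).1 ∈ X ∧ (e i).2 ∈ Y ∧ T (e i).1 (e i).2) ∧
    ∀ i j, i ≠ j → (e i).1 ≠ (e j).1 ∧ (e i).2 ≠ (e j).2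

/-- `u` is a Hamiltonian path of the subtournament induced on `S`, written as
`P = (u_{l} … u₂ u₁)`: the vertex `u ⟨0,_⟩` is `u₁`, and each arc goes from the
higher-indexed vertex to the next lower-indexed one. -/
def IsHamPathOn {V : Type*} (T : V → V → Prop) (S : Set V) {l : ℕ}
    (u : Fin l → V) : Prop :=
  Function.Injective u ∧ Set.range u = S ∧
    ∀ (i : ℕ) (h : i + 1 < l), T (u ⟨i + 1, h⟩) (u ⟨i, Nat.lt_of_succ_lt h⟩)

/-!
This is König's theorem for the bipartite graph of arcs from `X` to `Y`. By the defect form of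
Hall's theorem, applied to the in-neighbourhoods of the vertices of `Y`, some matching is as large
as some vertex cover. A vertex meets at most `m = max |X| |Y|` arcs, so a cover of more than `k * m`
arcs has more than `k` vertices. Here `k = q - 2`, `m = q + 1`, and `k * m = q ^ 2 - q - 2`.
-/

section DefectHall

variable {ι α β : Type*} [DecidableEq α]

theorem biUnion_disjSum_const [DecidableEq β] {s : Finset ι} (hs : s.Nonempty) (t : ι → Finset α)
    (u : Finset β) : (s.biUnion fun i ↦ (t i).disjSum u) = (s.biUnion t).disjSum u := by
  ext (a | b)
  · simp
  · simp [hs.exists_mem]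

theorem exists_injective_of_le_card_biUnion_add_card_compl [Fintype ι] [DecidableEq ι]
    {t : ι → Finset α} {r : ℕ} (hr : ∀ s : Finset ι, r ≤ (s.biUnion t).card + sᶜ.card) :
    ∃ (s : Finset ι) (f : s → α),
      r ≤ s.card ∧ Function.Injective f ∧ ∀ i : s, f i ∈ t i := by
  obtain ⟨d, hd⟩ : ∃ d, Fintype.card ι = r + d :=
    Nat.exists_eq_add_of_le (by simpa [Finset.card_univ] using hr ∅)
  -- Adding the same `d` dummy elements to every `t i` turns the defect condition into Hall's.
  let t' : ι → Finset (α ⊕ Fin d) := fun i ↦ (t i).disjSum Finset.univ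
  have hall : ∀ s : Finset ι, s.card ≤ (s.biUnion t').card := by
    intro s
    obtain rfl | hs := s.eq_empty_or_nonempty
    · simp
    · have hrs := hr s
      have hcompl := s.card_add_card_compl
      rw [biUnion_disjSum_const hs, Finset.card_disjSum, Finset.card_fin]
      omega
  obtain ⟨g, hg_inj, hg_mem⟩ := (Finset.all_card_le_biUnion_card_iff_exists_injective t').1 hall
  let s : Finset ι := {i | (g i).isLeft}
  have hleft (i : s) : ∃ a, g i = Sum.inl a :=
    Sum.isLeft_iff.1 (Finset.mem_filter.1 i.2).2
  have hdummy : sᶜ.card ≤ d := by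
    have hmaps : ∀ i ∈ sᶜ, g i ∈ Finset.univ.map (.inr : Fin d ↪ α ⊕ Fin d) := by
      intro i hi
      obtain ⟨b, hb⟩ : ∃ b, g i = Sum.inr b := by simpa [s, Sum.isRight_iff] using hi
      simp [hb]
    simpa using Finset.card_le_card_of_injOn g hmaps hg_inj.injOn
  choose f hf using hleft
  refine ⟨s, f, ?_, fun i j hij ↦ Subtype.ext (hg_inj ?_), fun i ↦ ?_⟩
  · have hcompl := s.card_add_card_compl
    omega
  · rw [hf, hf, hij]
  · simpa [t', hf] using hg_mem i

end DefectHall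

section Koenig

variable {V : Type*} {T : V → V → Prop} {X Y A B : Set V}

theorem HasMatching.of_injective {ι : Type*} [Fintype ι] {x y : ι → V} {r : ℕ}
    (hr : r ≤ Fintype.card ι) (hx : Function.Injective x) (hy : Function.Injective y)
    (harc : ∀ i, x i ∈ X ∧ y i ∈ Y ∧ T (x i) (y i)) : HasMatching T X Y r := by
  obtain ⟨e⟩ : Nonempty (Fin r ↪ ι) :=
    Function.Embedding.nonempty_of_card_le (by simpa using hr)
  exact ⟨fun i ↦ (x (e i), y (e i)), fun i ↦ harc (e i), fun i j hij ↦
    ⟨(hx.comp e.injective).ne hij, (hy.comp e.injective).ne hij⟩⟩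

theorem HasMatching.mono {r s : ℕ} (h : HasMatching T X Y s) (hrs : r ≤ s) :
    HasMatching T X Y r := by
  obtain ⟨e, harc, hdisj⟩ := h
  exact ⟨e ∘ Fin.castLE hrs, fun i ↦ harc _, fun i j hij ↦
    hdisj _ _ ((Fin.castLE_injective hrs).ne hij)⟩

/-- `A ⊆ X` and `B ⊆ Y` form a vertex cover of the bipartite graph of arcs from `X` to `Y`. The two
sides are kept apart because `X` and `Y` may overlap. -/
def IsArcCover (T : V → V → Prop) (X Y A B : Set V) : Prop :=
  A ⊆ X ∧ B ⊆ Y ∧ ∀ x ∈ X, ∀ y ∈ Y, T x y → x ∈ A ∨ y ∈ B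

theorem IsArcCover.arcs_le (h : IsArcCover T X Y A B) (hX : X.Finite) (hY : Y.Finite) :
    arcs T X Y ≤ A.ncard * Y.ncard + X.ncard * B.ncard := by
  obtain ⟨hA, hB, hcover⟩ := h
  have hfin : (A ×ˢ Y ∪ X ×ˢ B).Finite := ((hX.subset hA).prod hY).union (hX.prod (hY.subset hB))
  have hsub : {p : V × V | p.1 ∈ X ∧ p.2 ∈ Y ∧ T p.1 p.2} ⊆ A ×ˢ Y ∪ X ×ˢ B :=
    fun p ⟨hx, hy, hT⟩ ↦ (hcover _ hx _ hy hT).imp (fun hxA ↦ ⟨hxA, hy⟩) fun hyB ↦ ⟨hx, hyB⟩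
  calc arcs T X Y ≤ (A ×ˢ Y ∪ X ×ˢ B).ncard := ncard_le_ncard hsub hfin
    _ ≤ (A ×ˢ Y).ncard + (X ×ˢ B).ncard := ncard_union_le _ _
    _ = A.ncard * Y.ncard + X.ncard * B.ncard := by rw [ncard_prod, ncard_prod]

theorem isArcCover_biUnion_compl [DecidableEq V] [DecidableRel T] (X Y : Finset V) (s : Finset Y) :
    IsArcCover T X Y (s.biUnion fun y ↦ X.filter (T · y)) ((↑) '' (sᶜ : Set Y)) := by
  refine ⟨Finset.coe_subset.2 (Finset.biUnion_subset.2 fun _ _ ↦ Finset.filter_subset _ _),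
    Subtype.coe_image_subset _ _, fun x hx y hy hT ↦ ?_⟩
  by_cases hs : (⟨y, hy⟩ : Y) ∈ s
  · exact Or.inl (Finset.mem_biUnion.2 ⟨_, hs, Finset.mem_filter.2 ⟨hx, hT⟩⟩)
  · exact Or.inr ⟨⟨y, hy⟩, hs, rfl⟩

theorem exists_isArcCover_and_hasMatching (hX : X.Finite) (hY : Y.Finite) :
    ∃ A B, IsArcCover T X Y A B ∧ HasMatching T X Y (A.ncard + B.ncard) := by
  classical
  lift X to Finset V using hX
  lift Y to Finset V using hY
  let N : Y → Finset V := fun y ↦ X.filter (T · y)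
  obtain ⟨s, hs⟩ := Finite.exists_min fun s : Finset Y ↦ (s.biUnion N).card + sᶜ.card
  obtain ⟨u, f, hu, hf_inj, hf_mem⟩ :=
    exists_injective_of_le_card_biUnion_add_card_compl hs
  refine ⟨_, _, isArcCover_biUnion_compl X Y s, .of_injective (ι := u) (x := f) (y := fun y ↦ y)
    ?_ hf_inj (Subtype.val_injective.comp Subtype.val_injective) fun y ↦ ?_⟩
  · rwa [ncard_coe_finset, ncard_image_of_injective _ Subtype.val_injective, ← Finset.coe_compl,
      ncard_coe_finset, Fintype.card_coe]
  · obtain ⟨hfX, hfT⟩ := Finset.mem_filter.1 (hf_mem y)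
    exact ⟨hfX, y.1.2, hfT⟩

end Koenig

theorem stmt4_general {V : Type*} (T : V → V → Prop) {X Y : Set V} (hX : X.Finite) (hY : Y.Finite)
    {k m : ℕ} (hXm : X.ncard ≤ m) (hYm : Y.ncard ≤ m) (harcs : k * m < arcs T X Y) :
    HasMatching T X Y (k + 1) := by
  obtain ⟨A, B, hcover, hmatching⟩ := exists_isArcCover_and_hasMatching (T := T) hX hY
  refine hmatching.mono (Nat.succ_le_of_lt (lt_of_mul_lt_mul_right (a := m) ?_ m.zero_le))
  calc k * m < arcs T X Y := harcs
    _ ≤ A.ncard * Y.ncard + X.ncard * B.ncard := hcover.arcs_le hX hY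
    _ ≤ A.ncard * m + m * B.ncard := by gcongr
    _ = (A.ncard + B.ncard) * m := by ring

theorem stmt4 {V : Type*} [Fintype V] (T : V → V → Prop) (hT : IsTournament T)
    (q : ℕ) (hq : 2 ≤ q) (S₁ S₂ : Set V) (hdisj : Disjoint S₁ S₂)
    (h1 : S₁.ncard = q + 1) (h2 : S₂.ncard = q)
    (harcs : q ^ 2 - q - 1 ≤ arcs T S₁ S₂) :
    HasMatching T S₁ S₂ (q - 1) := by
  obtain ⟨k, rfl⟩ := Nat.exists_eq_add_of_le' hq
  have hsq : (k + 2) ^ 2 = k * (k + 3) + k + 4 := by ring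
  exact stmt4_general T S₁.toFinite S₂.toFinite (m := k + 3) h1.le (by omega) (by omega)
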